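/- Let n ≥ 1 and let R = ℂ[u_{ij} : 1 ≤ i < j ≤ 2n+1, (i,j) ≠ (1,2)]. Let u be the (2n+1)×(2n+1) skew-symmetric matrix over R with u_{12} = 1 and generic entries u_{ij} elsewhere (u_{ji} = −u_{ij}, u_{ii} = 0). Let M be the (2n−1)×(2n−1) skew-symmetric matrix over R with M_{ij} = u_{i+2,j+2} − (u_{1,i+2}·u_{2,j+2} − u_{1,j+2}·u_{2,i+2}) for 1 ≤ i < j ≤ 2n−1 (so M_{ij} is the Pfaffian of the principal 4×4 submatrix of u on rows and columns 1,2,i+2,j+2). Then for every p with 1 ≤ p ≤ n−1, the ideal of R generated by the Pfaffians of all principal 2(p+1)×2(p+1) submatrices of u equals the ideal of R generated by the Pfaffians of all principal 2p×2p submatrices of M. -/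

import Mathlib

open MvPolynomial

/-- The Pfaffian of a `2k × 2k` matrix `A` over a commutative `ℂ`-algebra:
`Pf(A) = (1/(2^k·k!)) ∑_{σ ∈ S_{2k}} sgn(σ) ∏_{i=1}^k A_{σ(2i−1),σ(2i)}`. -/
noncomputable def pfaffian {R : Type*} [CommRing R] [Algebra ℂ R] {k : ℕ}
    (A : Matrix (Fin (2 * k)) (Fin (2 * k)) R) : R :=
  (((2 : ℂ) ^ k * (Nat.factorial k : ℂ))⁻¹) •
    ∑ σ : Equiv.Perm (Fin (2 * k)),
      (Equiv.Perm.sign σ : ℤ) •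
        ∏ i : Fin k,
          A (σ ⟨2 * i.1, by have := i.2; omega⟩) (σ ⟨2 * i.1 + 1, by have := i.2; omega⟩)

open MvPolynomial

/-!
The Pfaffian of the Gram matrix of `2 * k` vectors under an alternating form `B` is itself an
alternating form in these vectors. Hence the ideal `I_k(B)` generated by all its values does not
depend on a basis, and for a skew-symmetric matrix it is the ideal of principal Pfaffians.

An entry `u₁₂ = 1` is a hyperbolic pair `B x y = 1`, and `M` is the matrix of the form `B'` induced
by `B` on the orthogonal complement of the plane `⟨x, y⟩`. Expanding along `x` gives
`Pf_{k+1}(B; x, y, w) = Pf_k(B'; w)` for `w` orthogonal to the plane, so `I_k(B') ≤ I_{k+1}(B)`.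
Conversely, in `Pf_{k+1}(B; x, v)` each vector of `v` may be moved by a multiple of `x` until the
Gram matrix is that of `B'`, and the expansion along `x` then lies in `I_k(B')`; the same holds for
`y`. So modulo `I_k(B')` every vector in `Pf_{k+1}(B; v)` may be replaced by its projection, which
turns it into `Pf_{k+1}(B'; v) ∈ I_{k+1}(B') ≤ I_k(B')`.
-/

section PermSum

open Equiv

variable {M : Type*} [AddCommMonoid M]

lemma sum_perm_eq_card_nsmul_sum_stabilizer {α : Type*} [Fintype α] [DecidableEq α] (a : α)
    (f : Perm α → M) (hf : ∀ b, ∃ ρ : Perm α, ρ a = b ∧ ∀ σ, f (σ * ρ) = f σ) :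
    ∑ σ, f σ = Fintype.card α • ∑ σ : Perm α with σ a = a, f σ := by
  have sum_fiber (b : α) :
      ∑ σ : Perm α with σ.symm a = b, f σ = ∑ σ : Perm α with σ a = a, f σ := by
    obtain ⟨ρ, hρ, hfρ⟩ := hf b
    refine Finset.sum_equiv (Equiv.mulRight ρ) (fun σ => ?_) (fun σ _ => (hfρ σ).symm)
    simp only [Finset.mem_filter_univ, Equiv.coe_mulRight, Perm.mul_apply, hρ, Equiv.symm_apply_eq]
    exact eq_comm
  rw [← Finset.sum_fiberwise (g := fun σ : Perm α => σ.symm a)]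
  simp only [sum_fiber, Finset.sum_const, Finset.card_univ]

lemma sum_perm_stabilizer_zero {n : ℕ} (f : Perm (Fin (n + 1)) → M) :
    ∑ σ : Perm (Fin (n + 1)) with σ 0 = 0, f σ = ∑ τ, f (Perm.decomposeFin.symm (0, τ)) := by
  rw [Finset.sum_filter, ← Perm.decomposeFin.symm.sum_comp, Fintype.sum_prod_type,
    Finset.sum_eq_single 0 (by simp +contextual) (by simp)]
  simp

lemma sum_perm_fin_succ {n : ℕ} (f : Perm (Fin (n + 1)) → M) :
    ∑ σ, f σ = ∑ j : Fin (n + 1), ∑ τ, f (j.cycleRange.symm * Perm.decomposeFin.symm (0, τ)) := by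
  rw [← Finset.sum_fiberwise (g := fun σ : Perm (Fin (n + 1)) => σ 0)]
  refine Finset.sum_congr rfl fun j _ => ?_
  rw [← sum_perm_stabilizer_zero fun σ => f (j.cycleRange.symm * σ)]
  refine (Finset.sum_equiv (Equiv.mulLeft j.cycleRange.symm) (fun σ => ?_) fun σ _ => rfl).symm
  simp [Equiv.symm_apply_eq]

lemma vecCons_comp_decomposeFin_symm {n : ℕ} {α : Type*} (x : α) (v : Fin n → α)
    (τ : Perm (Fin n)) :
    Matrix.vecCons x v ∘ Perm.decomposeFin.symm (0, τ) = Matrix.vecCons x (v ∘ τ) := by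
  ext i
  cases i using Fin.cases <;> simp

lemma comp_cycleRange_symm_mul {n : ℕ} {α : Type*} (v : Fin (n + 1) → α)
    (j : Fin (n + 1)) (τ : Perm (Fin n)) :
    v ∘ (j.cycleRange.symm * Perm.decomposeFin.symm (0, τ) : Perm (Fin (n + 1))) =
      Matrix.vecCons (v j) (j.removeNth v ∘ τ) := by
  ext i
  cases i using Fin.cases <;> simp [Fin.removeNth]

end PermSum

section PfaffianForm

open Equiv

variable {R V : Type*} [CommRing R] [AddCommGroup V] [Module R V]

/-- The bijection `(i, c) ↦ 2 * i + c`, listing the positions of `Fin (2 * k)` as the two members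
`c = 0, 1` of the `i`-th pair. -/
def pairIndex (k : ℕ) : Fin k × Fin 2 ≃ Fin (2 * k) :=
  finProdFinEquiv.trans (finCongr (mul_comm k 2))

/-- The product of the values of a bilinear form on consecutive pairs of vectors,
`B (v 0) (v 1) * B (v 2) (v 3) * ⋯`, whose alternation is the Pfaffian. -/
def pairProd (B : LinearMap.BilinForm R V) (k : ℕ) :
    MultilinearMap R (fun _ : Fin (2 * k) => V) R :=
  ((MultilinearMap.mkPiAlgebra R (Fin k) R).compMultilinearMap (β := fun _ => Fin 2)
    (N := fun _ _ => V) fun _ =>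
      LinearMap.uncurryLeft (M := fun _ : Fin 2 => V)
        ((MultilinearMap.ofSubsingletonₗ R R V R (0 : Fin 1)).toLinearMap ∘ₗ B)).domDomCongr
    ((Equiv.sigmaEquivProd (Fin k) (Fin 2)).trans (pairIndex k))

lemma pairProd_apply (B : LinearMap.BilinForm R V) (k : ℕ) (v : Fin (2 * k) → V) :
    pairProd B k v = ∏ i, B (v (pairIndex k (i, 0))) (v (pairIndex k (i, 1))) :=
  rfl

lemma sign_smul_apply_perm_fin_two {B : LinearMap.BilinForm R V} (hB : B.IsAlt) (π : Perm (Fin 2))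
    (w : Fin 2 → V) : B (w (π 0)) (w (π 1)) = π.sign • B (w 0) (w 1) := by
  obtain rfl | rfl : π = 1 ∨ π = swap 0 1 := by decide +revert
  · simp
  · simpa using (hB.neg_eq (w 0) (w 1)).symm

lemma sign_pairIndex_permCongr {k : ℕ} (τ : Perm (Fin k)) (π : Perm (Fin 2)) :
    Perm.sign ((pairIndex k).permCongr (τ.prodCongr π)) = π.sign ^ k := by
  have factor : τ.prodCongr π = prodCongrLeft (fun _ => τ) * prodCongrRight fun _ => π := rfl
  rw [Perm.sign_permCongr, factor, Perm.sign_mul, Perm.sign_prodCongrLeft, Perm.sign_prodCongrRight]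
  simp

lemma pairProd_comp_blockPerm {B : LinearMap.BilinForm R V} (hB : B.IsAlt) {k : ℕ}
    (τ : Perm (Fin k)) (π : Perm (Fin 2)) (v : Fin (2 * k) → V) :
    pairProd B k (v ∘ (pairIndex k).permCongr (τ.prodCongr π)) = π.sign ^ k • pairProd B k v := by
  simp only [pairProd_apply, Function.comp_apply, Equiv.permCongr_apply, Equiv.symm_apply_apply,
    Equiv.prodCongr_apply, Prod.map]
  rw [Equiv.prod_comp τ fun i => B (v (pairIndex k (i, π 0))) (v (pairIndex k (i, π 1)))]
  rw [Finset.prod_congr rfl fun i _ =>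
    sign_smul_apply_perm_fin_two hB π fun c => v (pairIndex k (i, c))]
  simp [Finset.prod_smul]

lemma exists_perm_pairProd_comp {B : LinearMap.BilinForm R V} (hB : B.IsAlt) {k : ℕ}
    (a b : Fin (2 * k)) :
    ∃ ρ : Perm (Fin (2 * k)), ρ a = b ∧ ∀ v, pairProd B k (v ∘ ρ) = ρ.sign • pairProd B k v := by
  obtain ⟨⟨i, c⟩, rfl⟩ := (pairIndex k).surjective a
  obtain ⟨⟨j, d⟩, rfl⟩ := (pairIndex k).surjective b
  refine ⟨(pairIndex k).permCongr ((swap i j).prodCongr (swap c d)), by simp, fun v => ?_⟩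
  rw [pairProd_comp_blockPerm hB, sign_pairIndex_permCongr]

lemma pairProd_vecCons_vecCons (B : LinearMap.BilinForm R V) {k : ℕ} (x y : V)
    (v : Fin (2 * k) → V) :
    pairProd B (k + 1) (Matrix.vecCons x (Matrix.vecCons y v)) = B x y * pairProd B k v := by
  rw [pairProd_apply, Fin.prod_univ_succ]
  rfl

lemma alternatization_pairProd_apply (B : LinearMap.BilinForm R V) (k : ℕ)
    (v : Fin (2 * k) → V) :
    (pairProd B k).alternatization v = ∑ σ : Perm (Fin (2 * k)), σ.sign • pairProd B k (v ∘ σ) :=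
  MultilinearMap.alternatization_apply _ _

lemma alternatization_pairProd_eq_nsmul_sum_stabilizer {B : LinearMap.BilinForm R V}
    (hB : B.IsAlt) {k : ℕ} (a : Fin (2 * k)) (v : Fin (2 * k) → V) :
    (pairProd B k).alternatization v =
      (2 * k) • ∑ σ : Perm (Fin (2 * k)) with σ a = a, σ.sign • pairProd B k (v ∘ σ) := by
  rw [alternatization_pairProd_apply, sum_perm_eq_card_nsmul_sum_stabilizer a, Fintype.card_fin]
  intro b
  obtain ⟨ρ, hρ, hBρ⟩ := exists_perm_pairProd_comp hB a b
  refine ⟨ρ, hρ, fun σ => ?_⟩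
  rw [Perm.coe_mul, ← Function.comp_assoc, hBρ, smul_smul, Perm.sign_mul, mul_assoc,
    Int.units_mul_self, mul_one]

lemma alternatization_pairProd_vecCons {B : LinearMap.BilinForm R V} (hB : B.IsAlt) {k : ℕ}
    (x : V) (v : Fin (2 * k + 1) → V) :
    (pairProd B (k + 1)).alternatization (Matrix.vecCons x v) =
      (2 * (k + 1)) • ∑ j : Fin (2 * k + 1),
        (-1) ^ (j : ℕ) * (B x (v j) * (pairProd B k).alternatization (j.removeNth v)) := by
  rw [alternatization_pairProd_eq_nsmul_sum_stabilizer hB (k := k + 1) 0 (Matrix.vecCons x v)]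
  congr 1
  refine (sum_perm_stabilizer_zero (n := 2 * k + 1) _).trans ?_
  rw [sum_perm_fin_succ]
  refine Finset.sum_congr rfl fun j _ => ?_
  rw [alternatization_pairProd_apply, Finset.mul_sum, Finset.mul_sum]
  refine Finset.sum_congr rfl fun τ _ => ?_
  rw [vecCons_comp_decomposeFin_symm, comp_cycleRange_symm_mul, pairProd_vecCons_vecCons]
  simp only [Perm.decomposeFin.symm_sign, Perm.sign_mul, Perm.sign_symm, Fin.sign_cycleRange,
    if_true, one_mul, Units.smul_def, zsmul_eq_mul]
  push_cast
  ring

variable [Algebra ℂ R]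

/-- The Pfaffian of the Gram matrix of `2 * k` vectors, as an alternating form. -/
noncomputable def pfaffianForm (B : LinearMap.BilinForm R V) (k : ℕ) :
    V [⋀^Fin (2 * k)]→ₗ[R] R :=
  algebraMap ℂ R (2 ^ k * (k.factorial : ℂ))⁻¹ • (pairProd B k).alternatization

lemma pfaffianForm_apply (B : LinearMap.BilinForm R V) (k : ℕ) (v : Fin (2 * k) → V) :
    pfaffianForm B k v = pfaffian (Matrix.of fun a b => B (v a) (v b)) := by
  have position (i : Fin k) (c : Fin 2) : pairIndex k (i, c) = ⟨2 * i + c, by lia⟩ :=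
    Fin.ext (add_comm _ _)
  rw [pfaffianForm, AlternatingMap.smul_apply, MultilinearMap.alternatization_apply, pfaffian,
    algebraMap_smul]
  simp [pairProd_apply, position, Units.smul_def]

lemma pfaffianForm_vecCons {B : LinearMap.BilinForm R V} (hB : B.IsAlt) {k : ℕ} (x : V)
    (v : Fin (2 * k + 1) → V) :
    pfaffianForm B (k + 1) (Matrix.vecCons x v) = ∑ j : Fin (2 * k + 1),
        (-1 : R) ^ (j : ℕ) * (B x (v j) * pfaffianForm B k (j.removeNth v)) := by
  have scalar : (2 ^ (k + 1) * ((k + 1).factorial : ℂ))⁻¹ * (2 * (k + 1) : ℕ) =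
      (2 ^ k * (k.factorial : ℂ))⁻¹ := by
    rw [Nat.factorial_succ]
    push_cast
    field_simp
    ring
  simp only [pfaffianForm, AlternatingMap.smul_apply, alternatization_pairProd_vecCons hB,
    smul_eq_mul, nsmul_eq_mul]
  rw [← mul_assoc, ← map_natCast (algebraMap ℂ R), ← map_mul, scalar, Finset.mul_sum]
  exact Finset.sum_congr rfl fun j _ => by ring

end PfaffianForm

section AlternatingMem

variable {R V N : Type*} [CommRing R] [AddCommGroup V] [Module R V] [AddCommGroup N] [Module R N]

lemma multilinearMap_add_mem_iff {ι : Type*} [Finite ι] [DecidableEq ι]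
    (F : MultilinearMap R (fun _ : ι => V) N) (P : Submodule R N) {h : ι → V}
    (hF : ∀ w i, F (Function.update w i (h i)) ∈ P) (v : ι → V) :
    F (v + h) ∈ P ↔ F v ∈ P := by
  cases nonempty_fintype ι
  have piecewise_mem (s : Finset ι) (hs : s ∈ Finset.univ.erase Finset.univ) :
      F (s.piecewise v h) ∈ P := by
    obtain ⟨i, hi⟩ : ∃ i, i ∉ s := by
      simpa [Finset.eq_univ_iff_forall] using hs
    have update_eq : Function.update (s.piecewise v h) i (h i) = s.piecewise v h := by
      rw [← s.piecewise_eq_of_notMem v h hi, Function.update_eq_self]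
    rw [← update_eq]
    exact hF _ i
  rw [F.map_add_univ, ← Finset.add_sum_erase _ _ (Finset.mem_univ Finset.univ),
    Finset.piecewise_univ]
  exact P.add_mem_iff_left (P.sum_mem piecewise_mem)

lemma alternatingMap_curryLeft_update_self {n : ℕ} (F : V [⋀^Fin (n + 1)]→ₗ[R] N) (x : V)
    (w : Fin n → V) (i : Fin n) : F.curryLeft x (Function.update w i x) = 0 :=
  F.map_eq_zero_of_eq _ (by simp) (Fin.succ_ne_zero i).symm

lemma alternatingMap_update_mem {n : ℕ} (F : V [⋀^Fin (n + 1)]→ₗ[R] N) {P : Submodule R N} {x : V}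
    (hF : ∀ v, F (Matrix.vecCons x v) ∈ P) (w : Fin (n + 1) → V) (i : Fin (n + 1)) :
    F (Function.update w i x) ∈ P := by
  rw [← Fin.insertNth_removeNth, F.map_insertNth]
  exact P.smul_of_tower_mem _ (hF _)

lemma alternatingMap_basis_comp_mem {ι : Type*} [LinearOrder ι] (b : Module.Basis ι R V) {m : ℕ}
    (F : V [⋀^Fin m]→ₗ[R] N) {P : Submodule R N}
    (hF : ∀ (s : Finset ι) (h : s.card = m), F (b ∘ s.orderEmbOfFin h) ∈ P) {a : Fin m → ι}
    (ha : Function.Injective a) : F (b ∘ a) ∈ P := by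
  let σ := Tuple.sort a
  have strictMono : StrictMono (a ∘ σ) :=
    (Tuple.monotone_sort a).strictMono_of_injective (ha.comp σ.injective)
  have card_range : (Finset.univ.image (a ∘ σ)).card = m := by
    rw [Finset.card_image_of_injective _ strictMono.injective, Finset.card_fin]
  have sorted_mem := hF _ card_range
  rw [← Finset.orderEmbOfFin_unique card_range (by simp) strictMono, ← Function.comp_assoc,
    F.map_perm] at sorted_mem
  simpa using P.smul_of_tower_mem σ.sign sorted_mem

lemma alternatingMap_mem_of_basis {ι : Type*} [LinearOrder ι] (b : Module.Basis ι R V) {m : ℕ}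
    (F : V [⋀^Fin m]→ₗ[R] N) {P : Submodule R N}
    (hF : ∀ (s : Finset ι) (h : s.card = m), F (b ∘ s.orderEmbOfFin h) ∈ P) (v : Fin m → V) :
    F v ∈ P := by
  have vanish : P.mkQ.compAlternatingMap F = 0 :=
    b.ext_alternating fun a ha => (Submodule.Quotient.mk_eq_zero P).2 <|
      alternatingMap_basis_comp_mem b F hF ha
  exact (Submodule.Quotient.mk_eq_zero P).1 (DFunLike.congr_fun vanish v)

end AlternatingMem

section PfaffianIdeal

variable {R V W : Type*} [CommRing R] [Algebra ℂ R] [AddCommGroup V] [Module R V] [AddCommGroup W]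
  [Module R W]

/-- The ideal generated by the Pfaffians of the Gram matrices of all families of `2 * k` vectors. -/
noncomputable def pfaffianIdeal (B : LinearMap.BilinForm R V) (k : ℕ) : Ideal R :=
  Ideal.span (Set.range (pfaffianForm B k))

lemma pfaffianForm_mem_pfaffianIdeal (B : LinearMap.BilinForm R V) (k : ℕ)
    (v : Fin (2 * k) → V) : pfaffianForm B k v ∈ pfaffianIdeal B k :=
  Ideal.subset_span ⟨v, rfl⟩

lemma pfaffianForm_compl₁₂ (B : LinearMap.BilinForm R V) (f : W →ₗ[R] V) (k : ℕ)
    (w : Fin (2 * k) → W) : pfaffianForm (B.compl₁₂ f f) k w = pfaffianForm B k (f ∘ w) := by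
  simp only [pfaffianForm_apply, LinearMap.compl₁₂_apply, Function.comp_apply]

lemma pfaffianIdeal_compl₁₂_of_surjective (B : LinearMap.BilinForm R V) {f : W →ₗ[R] V}
    (hf : Function.Surjective f) (k : ℕ) :
    pfaffianIdeal (B.compl₁₂ f f) k = pfaffianIdeal B k := by
  have precomp : ⇑(pfaffianForm (B.compl₁₂ f f) k) = pfaffianForm B k ∘ (f ∘ ·) :=
    funext (pfaffianForm_compl₁₂ B f k)
  rw [pfaffianIdeal, precomp, hf.comp_left.range_comp, pfaffianIdeal]

lemma pfaffianForm_vecCons_mem_pfaffianIdeal {B : LinearMap.BilinForm R V} (hB : B.IsAlt) {k : ℕ}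
    (x : V) (v : Fin (2 * k + 1) → V) :
    pfaffianForm B (k + 1) (Matrix.vecCons x v) ∈ pfaffianIdeal B k := by
  rw [pfaffianForm_vecCons hB]
  exact Ideal.sum_mem _ fun j _ => Ideal.mul_mem_left _ _ <| Ideal.mul_mem_left _ _ <|
    pfaffianForm_mem_pfaffianIdeal B k _

lemma pfaffianIdeal_succ_le {B : LinearMap.BilinForm R V} (hB : B.IsAlt) (k : ℕ) :
    pfaffianIdeal B (k + 1) ≤ pfaffianIdeal B k := by
  refine Ideal.span_le.2 ?_
  rintro _ ⟨v, rfl⟩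
  simpa only [SetLike.mem_coe, Matrix.cons_head_tail] using
    pfaffianForm_vecCons_mem_pfaffianIdeal hB (Matrix.vecHead (n := 2 * k + 1) v) (Matrix.vecTail v)

end PfaffianIdeal

section HyperbolicPair

variable {R V : Type*} [CommRing R] [AddCommGroup V] [Module R V]

/-- For `B` alternating and `B x y = 1`, the projection along the hyperbolic plane spanned by `x`
and `y` onto its orthogonal complement. -/
def hyperbolicProj (B : LinearMap.BilinForm R V) (x y : V) : V →ₗ[R] V :=
  LinearMap.id + (B y).smulRight x - (B x).smulRight y

/-- The form `(v, w) ↦ B (π v) (π w)`, where `π` is the projection `hyperbolicProj B x y`. -/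
def hyperbolicReduction (B : LinearMap.BilinForm R V) (x y : V) : LinearMap.BilinForm R V :=
  B.compl₁₂ (hyperbolicProj B x y) (hyperbolicProj B x y)

lemma hyperbolicProj_apply (B : LinearMap.BilinForm R V) (x y v : V) :
    hyperbolicProj B x y v = v + B y v • x - B x v • y :=
  rfl

lemma hyperbolicReduction_isAlt {B : LinearMap.BilinForm R V} (hB : B.IsAlt) (x y : V) :
    (hyperbolicReduction B x y).IsAlt := fun v => hB (hyperbolicProj B x y v)

variable {B : LinearMap.BilinForm R V} {x y : V}

lemma hyperbolicReduction_neg_swap :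
    hyperbolicReduction B y (-x) = hyperbolicReduction B x y := by
  have proj_eq : hyperbolicProj B y (-x) = hyperbolicProj B x y := by
    ext v
    simp only [hyperbolicProj_apply, map_neg, LinearMap.neg_apply, smul_neg, neg_smul]
    abel
  rw [hyperbolicReduction, proj_eq, hyperbolicReduction]

variable (hB : B.IsAlt) (hxy : B x y = 1)

include hB hxy

lemma hyperbolicProj_left : hyperbolicProj B x y x = 0 := by
  simp [hyperbolicProj_apply, hB.self_eq_zero, ← hB.neg_eq x y, hxy]

lemma hyperbolicProj_right : hyperbolicProj B x y y = 0 := by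
  simp [hyperbolicProj_apply, hB.self_eq_zero, hxy]

lemma bilin_left_hyperbolicProj (v : V) : B x (hyperbolicProj B x y v) = 0 := by
  simp [hyperbolicProj_apply, hB.self_eq_zero, hxy]

lemma bilin_right_hyperbolicProj (v : V) : B y (hyperbolicProj B x y v) = 0 := by
  simp [hyperbolicProj_apply, hB.self_eq_zero, ← hB.neg_eq x y, hxy]

lemma hyperbolicReduction_apply (v w : V) :
    hyperbolicReduction B x y v w = B v w - (B x v * B y w - B x w * B y v) := by
  have orth_x : B (hyperbolicProj B x y v) x = 0 := by
    rw [← hB.neg_eq, bilin_left_hyperbolicProj hB hxy, neg_zero]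
  have orth_y : B (hyperbolicProj B x y v) y = 0 := by
    rw [← hB.neg_eq, bilin_right_hyperbolicProj hB hxy, neg_zero]
  rw [hyperbolicReduction, LinearMap.compl₁₂_apply, hyperbolicProj_apply B x y w]
  simp only [map_add, map_sub, map_smul, orth_x, orth_y, smul_zero, add_zero, sub_zero]
  simp only [hyperbolicProj_apply, map_add, map_sub, map_smul, LinearMap.add_apply,
    LinearMap.sub_apply, LinearMap.smul_apply, smul_eq_mul]
  ring

variable [Algebra ℂ R]

lemma pfaffianForm_vecCons_vecCons_hyperbolicProj {k : ℕ} (w : Fin (2 * k) → V) :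
    pfaffianForm B (k + 1) (Matrix.vecCons x (Matrix.vecCons y (hyperbolicProj B x y ∘ w))) =
      pfaffianForm (hyperbolicReduction B x y) k w := by
  rw [pfaffianForm_vecCons hB, Fin.sum_univ_succ]
  simp [hxy, bilin_left_hyperbolicProj hB hxy, hyperbolicReduction, pfaffianForm_compl₁₂]

lemma pfaffianForm_add_smul_left {k : ℕ} (v : Fin (2 * k) → V) :
    pfaffianForm B k (fun i => v i + B y (v i) • x) =
      pfaffianForm (hyperbolicReduction B x y) k v := by
  simp only [pfaffianForm_apply]
  congr 2 with a b
  rw [hyperbolicReduction_apply hB hxy]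
  simp only [map_add, map_smul, LinearMap.add_apply, LinearMap.smul_apply, smul_eq_mul,
    hB.self_eq_zero, ← hB.neg_eq x (v a)]
  ring

lemma pfaffianForm_vecCons_left_mem {k : ℕ} (v : Fin (2 * k + 1) → V) :
    pfaffianForm B (k + 1) (Matrix.vecCons x v) ∈
      pfaffianIdeal (hyperbolicReduction B x y) k := by
  let F : V [⋀^Fin (2 * k + 1)]→ₗ[R] R := (pfaffianForm B (k + 1)).curryLeft x
  let h (i : Fin (2 * k + 1)) : V := B y (v i) • x
  have shift_mem : F (v + h) ∈ pfaffianIdeal (hyperbolicReduction B x y) k := by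
    rw [AlternatingMap.curryLeft_apply_apply, pfaffianForm_vecCons hB]
    refine Ideal.sum_mem _ fun j _ => Ideal.mul_mem_left _ _ <| Ideal.mul_mem_left _ _ ?_
    have reduce := pfaffianForm_add_smul_left hB hxy (j.removeNth v)
    exact reduce ▸ pfaffianForm_mem_pfaffianIdeal _ k _
  refine (multilinearMap_add_mem_iff F.toMultilinearMap _ (fun w i => ?_) v).1 shift_mem
  have update_self : F (Function.update w i x) = 0 :=
    alternatingMap_curryLeft_update_self (pfaffianForm B (k + 1)) x w i
  rw [MultilinearMap.map_update_smul, AlternatingMap.coe_multilinearMap, update_self, smul_zero]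
  exact Ideal.zero_mem _

lemma pfaffianForm_vecCons_right_mem {k : ℕ} (v : Fin (2 * k + 1) → V) :
    pfaffianForm B (k + 1) (Matrix.vecCons y v) ∈
      pfaffianIdeal (hyperbolicReduction B x y) k := by
  rw [← hyperbolicReduction_neg_swap]
  refine pfaffianForm_vecCons_left_mem hB ?_ v
  rw [map_neg, hB.neg_eq, hxy]

lemma pfaffianForm_succ_mem {k : ℕ} (v : Fin (2 * (k + 1)) → V) :
    pfaffianForm B (k + 1) v ∈ pfaffianIdeal (hyperbolicReduction B x y) k := by
  let F := pfaffianForm B (k + 1)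
  let h (i : Fin (2 * (k + 1))) : V := B y (v i) • x - B x (v i) • y
  have shift_mem : F (v + h) ∈ pfaffianIdeal (hyperbolicReduction B x y) k := by
    have shift_eq : v + h = hyperbolicProj B x y ∘ v :=
      funext fun i => (add_sub_assoc _ _ _).symm
    rw [shift_eq, ← pfaffianForm_compl₁₂]
    exact pfaffianIdeal_succ_le (hyperbolicReduction_isAlt hB x y) k
      (pfaffianForm_mem_pfaffianIdeal _ (k + 1) v)
  refine (multilinearMap_add_mem_iff F.toMultilinearMap _ (fun w i => ?_) v).1 shift_mem
  rw [MultilinearMap.map_update_sub, MultilinearMap.map_update_smul,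
    MultilinearMap.map_update_smul]
  exact Submodule.sub_mem _
    (Submodule.smul_mem _ _ <|
      alternatingMap_update_mem F (pfaffianForm_vecCons_left_mem hB hxy) w i)
    (Submodule.smul_mem _ _ <|
      alternatingMap_update_mem F (pfaffianForm_vecCons_right_mem hB hxy) w i)

theorem pfaffianIdeal_hyperbolicReduction (k : ℕ) :
    pfaffianIdeal (hyperbolicReduction B x y) k = pfaffianIdeal B (k + 1) := by
  refine le_antisymm (Ideal.span_le.2 ?_) (Ideal.span_le.2 ?_)
  · rintro _ ⟨w, rfl⟩
    rw [← pfaffianForm_vecCons_vecCons_hyperbolicProj hB hxy]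
    exact pfaffianForm_mem_pfaffianIdeal B (k + 1) _
  · rintro _ ⟨v, rfl⟩
    exact pfaffianForm_succ_mem hB hxy v

end HyperbolicPair

section PrincipalPfaffianIdeal

variable {R ι : Type*} [CommRing R] [Algebra ℂ R]

/-- The ideal generated by the Pfaffians of the `2 * k × 2 * k` principal submatrices of `A`, the
rows and columns of each submatrix being listed in increasing order. -/
noncomputable def principalPfaffianIdeal [LinearOrder ι] (A : Matrix ι ι R) (k : ℕ) : Ideal R :=
  Ideal.span {x | ∃ s : Finset ι, ∃ h : s.card = 2 * k,
    x = pfaffian (A.submatrix (fun a => (s.orderIsoOfFin h a : ι))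
      (fun a => (s.orderIsoOfFin h a : ι)))}

lemma pfaffianForm_toBilin'_basisFun [Fintype ι] [DecidableEq ι] (A : Matrix ι ι R) {k : ℕ}
    (a : Fin (2 * k) → ι) :
    pfaffianForm (Matrix.toBilin' A) k (Pi.basisFun R ι ∘ a) = pfaffian (A.submatrix a a) := by
  rw [pfaffianForm_apply]
  congr 1 with i j
  simp

lemma principalPfaffianIdeal_eq_pfaffianIdeal [Fintype ι] [LinearOrder ι] (A : Matrix ι ι R)
    (k : ℕ) : principalPfaffianIdeal A k = pfaffianIdeal (Matrix.toBilin' A) k := by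
  refine le_antisymm (Ideal.span_le.2 ?_) (Ideal.span_le.2 ?_)
  · rintro _ ⟨s, h, rfl⟩
    rw [← pfaffianForm_toBilin'_basisFun]
    exact pfaffianForm_mem_pfaffianIdeal _ k _
  · rintro _ ⟨v, rfl⟩
    refine alternatingMap_mem_of_basis (Pi.basisFun R ι) _ (fun s h => ?_) v
    exact Ideal.subset_span ⟨s, h, pfaffianForm_toBilin'_basisFun A _⟩

end PrincipalPfaffianIdeal

section FunLeft

variable {R ι κ : Type*} [Semiring R]

lemma funLeft_single_apply [DecidableEq ι] [DecidableEq κ] {e : κ → ι}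
    (he : Function.Injective e) (a : κ) :
    LinearMap.funLeft R R e (Pi.single (e a) 1) = Pi.single a 1 := by
  ext b
  simp [LinearMap.funLeft_apply, Pi.single_apply, he.eq_iff]

lemma funLeft_single_of_notMem_range [DecidableEq ι] {e : κ → ι} {i : ι}
    (hi : i ∉ Set.range e) : LinearMap.funLeft R R e (Pi.single i 1) = 0 := by
  ext b
  exact Pi.single_eq_of_ne (fun h => hi ⟨b, h⟩) 1

end FunLeft

section Matrix

variable {R ι κ : Type*} [CommRing R]

lemma toBilin'_isAlt [IsAddTorsionFree R] [Fintype ι] [DecidableEq ι] {A : Matrix ι ι R}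
    (hA : A.transpose = -A) : (Matrix.toBilin' A).IsAlt := by
  intro v
  have eq_neg : v ⬝ᵥ A.mulVec v = -(v ⬝ᵥ A.mulVec v) := by
    conv_lhs => rw [dotProduct_comm, ← Matrix.vecMul_transpose, ← Matrix.dotProduct_mulVec, hA]
    rw [Matrix.neg_mulVec, dotProduct_neg]
  rw [Matrix.toBilin'_apply', self_eq_neg.1 eq_neg]

/-- The matrix `A i j - (A i₀ i * A i₁ j - A i₀ j * A i₁ i)` with rows and columns re-indexed by
`e`; for `A i₀ i₁ = 1` its entries are the Pfaffians of `A` on the indices `i₀, i₁, i, j`. -/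
def pfaffianSchurComplement (A : Matrix ι ι R) (i₀ i₁ : ι) (e : κ → ι) : Matrix κ κ R :=
  Matrix.of fun a b => A (e a) (e b) - (A i₀ (e a) * A i₁ (e b) - A i₀ (e b) * A i₁ (e a))

lemma hyperbolicReduction_toBilin' [Fintype ι] [DecidableEq ι] [Fintype κ] [DecidableEq κ]
    {A : Matrix ι ι R} (hB : (Matrix.toBilin' A).IsAlt) {i₀ i₁ : ι} (h01 : A i₀ i₁ = 1)
    {e : κ → ι} (he : Function.Injective e) (range_e : Set.range e = {i₀, i₁}ᶜ) :
    hyperbolicReduction (Matrix.toBilin' A) (Pi.single i₀ 1) (Pi.single i₁ 1) =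
      (Matrix.toBilin' (pfaffianSchurComplement A i₀ i₁ e)).compl₁₂
        (LinearMap.funLeft R R e) (LinearMap.funLeft R R e) := by
  have pair : Matrix.toBilin' A (Pi.single i₀ 1) (Pi.single i₁ 1) = 1 := by
    rw [Matrix.toBilin'_single, h01]
  have funLeft_left : LinearMap.funLeft R R e (Pi.single i₀ 1) = 0 :=
    funLeft_single_of_notMem_range (by simp [range_e])
  have funLeft_right : LinearMap.funLeft R R e (Pi.single i₁ 1) = 0 :=
    funLeft_single_of_notMem_range (by simp [range_e])
  have index_cases (i : ι) : i = i₀ ∨ i = i₁ ∨ ∃ a, e a = i := by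
    have mem_iff := Set.ext_iff.1 range_e i
    simp only [Set.mem_range, Set.mem_compl_iff, Set.mem_insert_iff,
      Set.mem_singleton_iff] at mem_iff
    tauto
  refine LinearMap.BilinForm.ext_basis (Pi.basisFun R ι) fun i j => ?_
  simp only [Pi.basisFun_apply, LinearMap.compl₁₂_apply]
  obtain rfl | rfl | ⟨a, rfl⟩ := index_cases i
  · simp [hyperbolicReduction, hyperbolicProj_left hB pair, funLeft_left]
  · simp [hyperbolicReduction, hyperbolicProj_right hB pair, funLeft_right]
  obtain rfl | rfl | ⟨b, rfl⟩ := index_cases j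
  · simp [hyperbolicReduction, hyperbolicProj_left hB pair, funLeft_left]
  · simp [hyperbolicReduction, hyperbolicProj_right hB pair, funLeft_right]
  · simp only [hyperbolicReduction_apply hB pair, funLeft_single_apply he, Matrix.toBilin'_single,
      pfaffianSchurComplement, Matrix.of_apply]

theorem pfaffian_ideal_localization_general [Algebra ℂ R] [Finite ι] [LinearOrder ι] [Finite κ]
    [LinearOrder κ] {A : Matrix ι ι R} (hA : A.transpose = -A) {i₀ i₁ : ι} (h01 : A i₀ i₁ = 1)
    {e : κ → ι} (he : Function.Injective e) (range_e : Set.range e = {i₀, i₁}ᶜ) (p : ℕ) :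
    principalPfaffianIdeal A (p + 1) =
      principalPfaffianIdeal (pfaffianSchurComplement A i₀ i₁ e) p := by
  cases nonempty_fintype ι
  cases nonempty_fintype κ
  have : IsAddTorsionFree R := .of_isTorsionFree ℂ R
  have alt : (Matrix.toBilin' A).IsAlt := toBilin'_isAlt hA
  have pair : Matrix.toBilin' A (Pi.single i₀ 1) (Pi.single i₁ 1) = 1 := by
    rw [Matrix.toBilin'_single, h01]
  rw [principalPfaffianIdeal_eq_pfaffianIdeal, principalPfaffianIdeal_eq_pfaffianIdeal,
    ← pfaffianIdeal_hyperbolicReduction alt pair,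
    hyperbolicReduction_toBilin' alt h01 he range_e,
    pfaffianIdeal_compl₁₂_of_surjective _ (LinearMap.funLeft_surjective_of_injective R R e he)]

end Matrix

section GenericSkew

/-- The generic skew-symmetric `N × N` matrix normalised to have `(0, 1)` entry `1`: its entries
above the diagonal other than that one are indeterminates. -/
noncomputable def normalizedGenericSkew (N : ℕ) [NeZero N] : Matrix (Fin N) (Fin N)
    (MvPolynomial {q : Fin N × Fin N // q.1 < q.2 ∧ q ≠ ((0 : Fin N), (1 : Fin N))} ℂ) :=
  Matrix.of fun i j =>
    if h : i < j then
      (if h2 : (i, j) = ((0 : Fin N), (1 : Fin N)) then 1 else X ⟨(i, j), ⟨h, h2⟩⟩)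
    else if h' : j < i then
      (if h2 : (j, i) = ((0 : Fin N), (1 : Fin N)) then -1 else -X ⟨(j, i), ⟨h', h2⟩⟩)
    else 0

lemma normalizedGenericSkew_transpose (N : ℕ) [NeZero N] :
    (normalizedGenericSkew N).transpose = -normalizedGenericSkew N := by
  ext1 i j
  obtain hij | rfl | hij := lt_trichotomy i j
  · simp only [normalizedGenericSkew, Matrix.transpose_apply, Matrix.neg_apply, Matrix.of_apply,
      dif_pos hij, dif_neg hij.not_gt]
    split_ifs <;> rfl
  · simp [normalizedGenericSkew]
  · simp only [normalizedGenericSkew, Matrix.transpose_apply, Matrix.neg_apply, Matrix.of_apply,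
      dif_pos hij, dif_neg hij.not_gt]
    split_ifs <;> simp

lemma normalizedGenericSkew_zero_one (N : ℕ) [NeZero N] (hN : 1 < N) :
    normalizedGenericSkew N 0 1 = 1 := by
  have zero_lt_one : (0 : Fin N) < 1 := by
    simp [Fin.lt_def, Nat.mod_eq_of_lt hN]
  simp only [normalizedGenericSkew, Matrix.of_apply, dif_pos zero_lt_one, dite_true]

lemma range_eq_compl_zero_one {m N : ℕ} [NeZero N] (hN : N = m + 2) {e : Fin m → Fin N}
    (he : ∀ a, (e a : ℕ) = a + 2) : Set.range e = {0, 1}ᶜ := by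
  subst hN
  ext i
  simp only [Set.mem_range, Set.mem_compl_iff, Set.mem_insert_iff, Set.mem_singleton_iff,
    Fin.ext_iff, he, Fin.val_zero, Fin.val_one]
  refine ⟨by rintro ⟨a, ha⟩; lia, fun hi => ⟨⟨i - 2, by lia⟩, ?_⟩⟩
  grind

end GenericSkew

/-- Let `u` be the generic `(2n+1) × (2n+1)` skew-symmetric matrix with `u₁₂ = 1`
over `R = ℂ[u_{ij} : 1 ≤ i < j ≤ 2n+1, (i,j) ≠ (1,2)]`, and let `M` be the
`(2n−1) × (2n−1)` skew-symmetric matrix with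
`M_{ij} = u_{i+2,j+2} − (u_{1,i+2}·u_{2,j+2} − u_{1,j+2}·u_{2,i+2})`. Then for every
`1 ≤ p ≤ n−1`, the ideal generated by the Pfaffians of all principal
`2(p+1) × 2(p+1)` submatrices of `u` equals the ideal generated by the Pfaffians
of all principal `2p × 2p` submatrices of `M`. -/
theorem pfaffian_ideal_localization (n : ℕ) (hn : 1 ≤ n) (p : ℕ)
    (hp1 : 1 ≤ p) (hpn : p ≤ n - 1) :
    let u : Matrix (Fin (2 * n + 1)) (Fin (2 * n + 1))
        (MvPolynomial {q : Fin (2 * n + 1) × Fin (2 * n + 1) //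
          q.1 < q.2 ∧ q ≠ ((0 : Fin (2 * n + 1)), (1 : Fin (2 * n + 1)))} ℂ) :=
      Matrix.of fun i j =>
        if h : i < j then
          (if h2 : (i, j) = ((0 : Fin (2 * n + 1)), (1 : Fin (2 * n + 1))) then 1
           else X ⟨(i, j), ⟨h, h2⟩⟩)
        else if h' : j < i then
          (if h2 : (j, i) = ((0 : Fin (2 * n + 1)), (1 : Fin (2 * n + 1))) then -1
           else -X ⟨(j, i), ⟨h', h2⟩⟩)
        else 0
    let e : Fin (2 * n - 1) → Fin (2 * n + 1) := fun a => ⟨a.1 + 2, by have := a.2; omega⟩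
    let M := Matrix.of fun a b : Fin (2 * n - 1) =>
      u (e a) (e b) - (u 0 (e a) * u 1 (e b) - u 0 (e b) * u 1 (e a))
    Ideal.span {x | ∃ s : Finset (Fin (2 * n + 1)), ∃ h : s.card = 2 * (p + 1),
        x = pfaffian (u.submatrix
          (fun a => (s.orderIsoOfFin h a : Fin (2 * n + 1)))
          (fun a => (s.orderIsoOfFin h a : Fin (2 * n + 1))))}
      = Ideal.span {x | ∃ s : Finset (Fin (2 * n - 1)), ∃ h : s.card = 2 * p,
          x = pfaffian (M.submatrix
            (fun a => (s.orderIsoOfFin h a : Fin (2 * n - 1)))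
            (fun a => (s.orderIsoOfFin h a : Fin (2 * n - 1))))} := by
  intro u e _
  exact pfaffian_ideal_localization_general (normalizedGenericSkew_transpose _)
    (normalizedGenericSkew_zero_one _ (by lia))
    (fun a b hab => by simpa [e, Fin.ext_iff] using hab)
    (range_eq_compl_zero_one (e := e) (by lia) fun _ => rfl) p
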